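/- Let M be a projective left R-module such that every submodule of M is M-generated, and assume the lattice Λ^{fi}(M) of fully invariant submodules is compact. Then the following are equivalent: (a) M is strongly harmonic; (b) Λ^{fi}(M) is a normal lattice; (c) for every fully invariant submodule N and every 𝓜 ∈ mx^fi(M), Ler(N) ≤ 𝓜 if and only if N ≤ 𝓜; (d) Ler preserves arbitrary sums: Ler(Σ_{i∈I} N_i) = Σ_{i∈I} Ler(N_i) for every family (N_i) of fully invariant submodules; (e) for all fully invariant N, L, if N + L = M then Ler(N) + Ler(L) = M. -/

import Mathlib

/-!
The fully invariant submodules form a complete lattice with the product `N ·_M L`, and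
`AnnM K` is the set of elements killed by every map `M → K`. Since `⊤ ·_M A = A`, a fully
invariant `N` with `N ⊔ B = ⊤` satisfies `A ≤ N ⊔ B ·_M A`. This has three consequences:
`Ler N ≤ N`; submodules comaximal with `N` are closed under intersection; and maximal fully
invariant submodules are prime. Projectivity of `M` gives
`AnnM K₁ ⊓ AnnM K₂ ≤ AnnM (K₁ ⊔ K₂)`, so the family defining `Ler N` is directed, and compactness
then lets a single member of the family replace `Ler N` in an equation `L ⊔ Ler N = ⊤`.

The cycle of implications is as follows.
* Strongly harmonic implies the condition on maximal elements: if `N ≰ 𝓜`, then `N` together with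
  the directed family of all `AnnM A`, `A ≰ 𝓜`, lies in no maximal element, so `N ⊔ AnnM A = ⊤`
  for some `A ≰ 𝓜`, and `A ≤ Ler N`.
* The condition on maximal elements implies that `Ler` preserves sums: if `sSup S ⊔ AnnM K = ⊤`
  then no maximal element contains `⨆ Ler N` and `AnnM K`, so they are comaximal and `K ≤ ⨆ Ler N`.
* Preservation of sums implies the covering condition because `Ler ⊤ = ⊤`.
* The covering condition implies normality: `N ⊔ Ler L = ⊤` gives `K` with `N ⊔ K = ⊤` and
  `L ⊔ AnnM K = ⊤`, and `AnnM K ·_M K = 0`.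
* Normality implies strongly harmonic because distinct maximal elements are comaximal.
-/


open Submodule

variable {R : Type*} [Ring R] {M : Type*} [AddCommGroup M] [Module R M]

/-- The product `N ·_M L = Σ { f(N) : f ∈ Hom_R(M, L) }` of submodules of `M`. -/
def SmProd (N L : Submodule R M) : Submodule R M :=
  ⨆ f : M →ₗ[R] L, N.map (L.subtype ∘ₗ f)

/-- A submodule is fully invariant if it is stable under every endomorphism of `M`. -/
def IsFI (N : Submodule R M) : Prop :=
  ∀ f : M →ₗ[R] M, N.map f ≤ N

/-- `N` is a maximal proper fully invariant submodule of `M`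
(a coatom of the lattice of fully invariant submodules). -/
def IsMaxFI (N : Submodule R M) : Prop :=
  IsFI N ∧ N ≠ ⊤ ∧ ∀ L : Submodule R M, IsFI L → N < L → L = ⊤

/-- `M` is strongly harmonic if for every pair of distinct maximal proper fully invariant
submodules `N, L` there are fully invariant `N', L'` with `N' ⊄ N`, `L' ⊄ L`, `L' ·_M N' = 0`. -/
def StronglyHarmonic (R M : Type*) [Ring R] [AddCommGroup M] [Module R M] : Prop :=
  ∀ N L : Submodule R M, IsMaxFI N → IsMaxFI L → N ≠ L →
    ∃ N' L' : Submodule R M, IsFI N' ∧ IsFI L' ∧ ¬ N' ≤ N ∧ ¬ L' ≤ L ∧ SmProd L' N' = ⊥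

/-- `Ann_M(K) = Σ { L ≤ M : L ·_M K = 0 }`. -/
def AnnM (K : Submodule R M) : Submodule R M :=
  sSup {L : Submodule R M | SmProd L K = ⊥}

/-- `Ler(N) = Σ { K fully invariant : N + Ann_M(K) = M }`. -/
def Ler (N : Submodule R M) : Submodule R M :=
  sSup {K : Submodule R M | IsFI K ∧ N ⊔ AnnM K = ⊤}

/-- `M` is quasi-projective. -/
def QuasiProjective (R M : Type*) [Ring R] [AddCommGroup M] [Module R M] : Prop :=
  ∀ (K : Submodule R M) (h : M →ₗ[R] M ⧸ K), ∃ g : M →ₗ[R] M, K.mkQ ∘ₗ g = h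

/-- The lattice `Λ^{fi}(M)` of fully invariant submodules is compact. -/
def FICompact (R M : Type*) [Ring R] [AddCommGroup M] [Module R M] : Prop :=
  ∀ S : Set (Submodule R M), (∀ N ∈ S, IsFI N) → sSup S = ⊤ →
    ∃ F : Finset (Submodule R M), ↑F ⊆ S ∧ sSup (F : Set (Submodule R M)) = ⊤

/-- The lattice `Λ^{fi}(M)` is normal. -/
def FINormal (R M : Type*) [Ring R] [AddCommGroup M] [Module R M] : Prop :=
  ∀ N L : Submodule R M, IsFI N → IsFI L → N ⊔ L = ⊤ →
    ∃ N' L' : Submodule R M, IsFI N' ∧ IsFI L' ∧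
      N ⊔ L' = ⊤ ∧ N' ⊔ L = ⊤ ∧ SmProd N' L' = ⊥

/-- Gelfand module. -/
def Gelfand (R M : Type*) [Ring R] [AddCommGroup M] [Module R M] : Prop :=
  ∀ N L : Submodule R M, IsCoatom N → IsCoatom L → N ≠ L →
    ∃ N' L' : Submodule R M, IsFI N' ∧ IsFI L' ∧ ¬ N' ≤ N ∧ ¬ L' ≤ L ∧ SmProd L' N' = ⊥

/-- The hull-kernel topology on `mx^{fi}(M)`, generated by the sets
`m(K) = {𝓜 : K ⊄ 𝓜}` for `K` fully invariant. -/
def mxfiTop (R M : Type*) [Ring R] [AddCommGroup M] [Module R M] :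
    TopologicalSpace {N : Submodule R M // IsMaxFI N} :=
  TopologicalSpace.generateFrom
    {U | ∃ K : Submodule R M, IsFI K ∧ U = {𝓜 : {N : Submodule R M // IsMaxFI N} | ¬ K ≤ 𝓜.1}}

/-- The frame `Ψ(M)`. -/
def PsiSet (R M : Type*) [Ring R] [AddCommGroup M] [Module R M] : Set (Submodule R M) :=
  {N | IsFI N ∧ ∀ n ∈ N, N ⊔ AnnM (Submodule.span R {n}) = ⊤}

/-- The points (`∧`-irreducible elements) of `Ψ(M)`. -/
def PsiPt (R M : Type*) [Ring R] [AddCommGroup M] [Module R M] : Set (Submodule R M) :=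
  {p | p ∈ PsiSet R M ∧ p ≠ ⊤ ∧
    ∀ N ∈ PsiSet R M, ∀ L ∈ PsiSet R M, N ⊓ L ≤ p → N ≤ p ∨ L ≤ p}

/-- The topology on the point space of `Ψ(M)`, with opens generated by
`U(N) = {p : N ⊄ p}` for `N ∈ Ψ(M)`. -/
def psiPtTop (R M : Type*) [Ring R] [AddCommGroup M] [Module R M] :
    TopologicalSpace (PsiPt R M) :=
  TopologicalSpace.generateFrom
    {U | ∃ N ∈ PsiSet R M, U = {p : PsiPt R M | ¬ N ≤ p.1}}

theorem IsFI.apply_mem {N : Submodule R M} (hN : IsFI N) (f : M →ₗ[R] M) {n : M} (hn : n ∈ N) :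
    f n ∈ N :=
  hN f (mem_map_of_mem hn)

theorem IsFI.sSup {S : Set (Submodule R M)} (hS : ∀ N ∈ S, IsFI N) : IsFI (sSup S) := by
  intro f
  rw [map_le_iff_le_comap]
  exact sSup_le fun N hN => map_le_iff_le_comap.1 ((hS N hN f).trans (le_sSup hN))

theorem IsFI.sup {N L : Submodule R M} (hN : IsFI N) (hL : IsFI L) : IsFI (N ⊔ L) := by
  intro f
  rw [Submodule.map_sup]
  exact sup_le_sup (hN f) (hL f)

theorem IsFI.inf {N L : Submodule R M} (hN : IsFI N) (hL : IsFI L) : IsFI (N ⊓ L) :=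
  fun f => le_inf ((map_mono inf_le_left).trans (hN f)) ((map_mono inf_le_right).trans (hL f))

theorem isFI_bot : IsFI (⊥ : Submodule R M) := fun f => by simp

theorem isFI_top : IsFI (⊤ : Submodule R M) := fun _ => le_top

theorem smProd_eq_bot_iff {N L : Submodule R M} :
    SmProd N L = ⊥ ↔ ∀ f : M →ₗ[R] L, ∀ n ∈ N, f n = 0 := by
  simp only [SmProd, iSup_eq_bot, Submodule.eq_bot_iff, Submodule.mem_map]
  constructor
  · intro h f n hn
    exact Subtype.ext (h f _ ⟨n, hn, rfl⟩)
  · rintro h f _ ⟨n, hn, rfl⟩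
    simp [h f n hn]

theorem smProd_le {N L P : Submodule R M} (h : ∀ f : M →ₗ[R] L, ∀ n ∈ N, (f n : M) ∈ P) :
    SmProd N L ≤ P := by
  refine iSup_le fun f => ?_
  rintro _ ⟨n, hn, rfl⟩
  exact h f n hn

theorem mem_smProd {N L : Submodule R M} (f : M →ₗ[R] L) {n : M} (hn : n ∈ N) :
    (f n : M) ∈ SmProd N L :=
  le_iSup (fun f : M →ₗ[R] L => N.map (L.subtype ∘ₗ f)) f ⟨n, hn, rfl⟩

/-- `AnnM K` is the intersection of the kernels of all maps `M → K`. -/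
theorem mem_annM {K : Submodule R M} {m : M} : m ∈ AnnM K ↔ ∀ f : M →ₗ[R] K, f m = 0 := by
  constructor
  · intro hm f
    have h : AnnM K ≤ LinearMap.ker f :=
      sSup_le fun L hL n hn => smProd_eq_bot_iff.1 hL f n hn
    exact h hm
  · intro h
    have hle : (⨅ f : M →ₗ[R] K, LinearMap.ker f) ≤ AnnM K := by
      refine le_sSup (smProd_eq_bot_iff.2 fun f n hn => ?_)
      exact (Submodule.mem_iInf _).1 hn f
    exact hle ((Submodule.mem_iInf _).2 h)

theorem smProd_annM (K : Submodule R M) : SmProd (AnnM K) K = ⊥ :=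
  smProd_eq_bot_iff.2 fun f _ hn => mem_annM.1 hn f

theorem isFI_annM (K : Submodule R M) : IsFI (AnnM K) := by
  rintro g _ ⟨m, hm, rfl⟩
  exact mem_annM.2 fun f => mem_annM.1 hm (f ∘ₗ g)

theorem annM_anti {K L : Submodule R M} (h : K ≤ L) : AnnM L ≤ AnnM K := fun m hm =>
  mem_annM.2 fun f => by
    have := mem_annM.1 hm (inclusion h ∘ₗ f)
    exact inclusion_injective h (by simpa using this)

theorem annM_bot : AnnM (⊥ : Submodule R M) = ⊤ :=
  eq_top_iff.2 fun _ _ => mem_annM.2 fun _ => Subsingleton.elim _ _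

/-- A map `M → K ⊔ L` lifts along `K × L → K ⊔ L`, hence kills whatever all maps to `K` and all
maps to `L` kill. -/
theorem annM_inf_le (hproj : Module.Projective R M) (K L : Submodule R M) :
    AnnM K ⊓ AnnM L ≤ AnnM (K ⊔ L) := by
  rintro m ⟨hK, hL⟩
  refine mem_annM.2 fun f => ?_
  let p : (K × L) →ₗ[R] (K ⊔ L : Submodule R M) :=
    (inclusion le_sup_left).coprod (inclusion le_sup_right)
  have hp : Function.Surjective p := by
    rintro ⟨x, hx⟩
    obtain ⟨k, hk, l, hl, rfl⟩ := Submodule.mem_sup.1 hx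
    exact ⟨(⟨k, hk⟩, ⟨l, hl⟩), Subtype.ext rfl⟩
  obtain ⟨g, hg⟩ := Module.projective_lifting_property p f hp
  have h1 := mem_annM.1 hK (LinearMap.fst R K L ∘ₗ g)
  have h2 := mem_annM.1 hL (LinearMap.snd R K L ∘ₗ g)
  have h3 : g m = 0 := Prod.ext h1 h2
  rw [← hg, LinearMap.comp_apply, h3, map_zero]

/-- Multiply `⊤ = N ⊔ B` by `A` on the right and use `⊤ ·_M A = A` and `N ·_M A ≤ N`. -/
theorem le_sup_smProd (hgen : ∀ L : Submodule R M, SmProd ⊤ L = L) {N B : Submodule R M}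
    (hN : IsFI N) (h : N ⊔ B = ⊤) (A : Submodule R M) : A ≤ N ⊔ SmProd B A := by
  nth_rw 1 [← hgen A]
  refine smProd_le fun f m _ => ?_
  obtain ⟨n, hn, b, hb, rfl⟩ := Submodule.mem_sup.1 (h ▸ Submodule.mem_top : m ∈ N ⊔ B)
  rw [map_add, Submodule.coe_add]
  exact Submodule.add_mem_sup (hN.apply_mem (A.subtype ∘ₗ f) hn) (mem_smProd f hb)

/-- Comaximality with `N` is stable under intersection. For `N` maximal this says that `N` is
prime. -/
theorem sup_inf_eq_top (hgen : ∀ L : Submodule R M, SmProd ⊤ L = L) {N A B : Submodule R M}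
    (hN : IsFI N) (hB : IsFI B) (h1 : N ⊔ A = ⊤) (h2 : N ⊔ B = ⊤) :
    N ⊔ (A ⊓ B) = ⊤ := by
  refine eq_top_iff.2 (h1.ge.trans (sup_le le_sup_left ?_))
  refine (le_sup_smProd hgen hN h2 A).trans (sup_le_sup_left ?_ N)
  exact smProd_le fun f n hn => ⟨(f n).2, hB.apply_mem (A.subtype ∘ₗ f) hn⟩

theorem le_of_sup_annM_eq_top (hgen : ∀ L : Submodule R M, SmProd ⊤ L = L)
    {N K : Submodule R M} (hN : IsFI N) (h : N ⊔ AnnM K = ⊤) : K ≤ N := by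
  simpa [smProd_annM] using le_sup_smProd hgen hN h K

theorem isFI_ler (N : Submodule R M) : IsFI (Ler N) := IsFI.sSup fun _ h => h.1

theorem ler_le (hgen : ∀ L : Submodule R M, SmProd ⊤ L = L) {N : Submodule R M} (hN : IsFI N) :
    Ler N ≤ N :=
  sSup_le fun _ h => le_of_sup_annM_eq_top hgen hN h.2

theorem ler_mono {N L : Submodule R M} (h : N ≤ L) : Ler N ≤ Ler L :=
  sSup_le_sSup fun _ hK => ⟨hK.1, eq_top_iff.2 (hK.2.ge.trans (sup_le_sup_right h _))⟩

theorem ler_top : Ler (⊤ : Submodule R M) = ⊤ :=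
  eq_top_iff.2 (le_sSup ⟨isFI_top, top_sup_eq _⟩)

/-- Compactness for directed families: among the `N ⊔ K` with `K ∈ S`, finitely many already sum
to `⊤`, and by directedness a single one dominates them. -/
theorem exists_sup_eq_top (hcomp : FICompact R M) {N : Submodule R M} (hN : IsFI N)
    {S : Set (Submodule R M)} (hS : ∀ K ∈ S, IsFI K) (hne : S.Nonempty)
    (hdir : DirectedOn (· ≤ ·) S) (h : N ⊔ sSup S = ⊤) : ∃ K ∈ S, N ⊔ K = ⊤ := by
  obtain ⟨F, hF, hFtop⟩ := hcomp ((N ⊔ ·) '' S)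
    (by rintro _ ⟨K, hK, rfl⟩; exact hN.sup (hS K hK))
    (by
      obtain ⟨K₀, hK₀⟩ := hne
      refine eq_top_iff.2 (h.ge.trans (sup_le ?_ (sSup_le fun K hK => ?_)))
      · exact le_sup_left.trans (le_sSup (Set.mem_image_of_mem (N ⊔ ·) hK₀))
      · exact le_sup_right.trans (le_sSup (Set.mem_image_of_mem (N ⊔ ·) hK)))
  have key : ∀ F : Finset (Submodule R M), ↑F ⊆ (N ⊔ ·) '' S →
      ∃ K ∈ S, ∀ P ∈ F, P ≤ N ⊔ K := by
    classical
    intro F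
    induction F using Finset.induction_on with
    | empty =>
      intro _
      obtain ⟨K₀, hK₀⟩ := hne
      exact ⟨K₀, hK₀, by simp⟩
    | insert P F _ ih =>
      intro hsub
      rw [Finset.coe_insert, Set.insert_subset_iff] at hsub
      obtain ⟨K, hK, hKF⟩ := ih hsub.2
      obtain ⟨⟨L, hL, rfl⟩, -⟩ := hsub
      obtain ⟨Q, hQ, hKQ, hLQ⟩ := hdir K hK L hL
      refine ⟨Q, hQ, fun P hP => ?_⟩
      rcases Finset.mem_insert.1 hP with rfl | hP
      · exact sup_le_sup_left hLQ N
      · exact (hKF P hP).trans (sup_le_sup_left hKQ N)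
  obtain ⟨K, hK, hKF⟩ := key F hF
  exact ⟨K, hK, eq_top_iff.2 (hFtop.ge.trans (sSup_le hKF))⟩

theorem exists_isMaxFI (hcomp : FICompact R M) {P : Submodule R M} (hP : IsFI P)
    (hne : P ≠ ⊤) : ∃ 𝓜 : Submodule R M, IsMaxFI 𝓜 ∧ P ≤ 𝓜 := by
  obtain ⟨𝓜, hPM, hmax⟩ := zorn_le_nonempty₀ {N : Submodule R M | IsFI N ∧ N ≠ ⊤}
    (fun c hc hchain y hy => by
      refine ⟨sSup c, ⟨IsFI.sSup fun N hN => (hc hN).1, fun htop => ?_⟩, fun z hz => le_sSup hz⟩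
      obtain ⟨K, hK, hKtop⟩ := exists_sup_eq_top hcomp isFI_bot (fun N hN => (hc hN).1)
        ⟨y, hy⟩ hchain.directedOn (by rw [htop, bot_sup_eq])
      exact (hc hK).2 (by rwa [bot_sup_eq] at hKtop)) P ⟨hP, hne⟩
  refine ⟨𝓜, ⟨hmax.prop.1, hmax.prop.2, fun L hL hlt => ?_⟩, hPM⟩
  by_contra hLtop
  exact hmax.not_prop_of_gt hlt ⟨hL, hLtop⟩

theorem IsMaxFI.sup_eq_top {𝓜 N : Submodule R M} (hM : IsMaxFI 𝓜) (hN : IsFI N)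
    (h : ¬ N ≤ 𝓜) : 𝓜 ⊔ N = ⊤ :=
  hM.2.2 _ (hM.1.sup hN) (left_lt_sup.2 h)

/-- The family defining `Ler L` is directed, so one member of it can replace `Ler L`. -/
theorem exists_of_sup_ler_eq_top (hproj : Module.Projective R M)
    (hgen : ∀ L : Submodule R M, SmProd ⊤ L = L) (hcomp : FICompact R M)
    {N L : Submodule R M} (hN : IsFI N) (hL : IsFI L) (h : N ⊔ Ler L = ⊤) :
    ∃ K : Submodule R M, IsFI K ∧ N ⊔ K = ⊤ ∧ L ⊔ AnnM K = ⊤ := by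
  obtain ⟨K, hK, hNK⟩ := exists_sup_eq_top hcomp hN
    (S := {K | IsFI K ∧ L ⊔ AnnM K = ⊤}) (fun K hK => hK.1)
    ⟨⊥, isFI_bot, by rw [annM_bot, sup_top_eq]⟩
    (fun A hA B hB => ⟨A ⊔ B, ⟨hA.1.sup hB.1, eq_top_iff.2
      ((sup_inf_eq_top hgen hL (isFI_annM B) hA.2 hB.2).ge.trans
        (sup_le_sup_left (annM_inf_le hproj A B) L))⟩, le_sup_left, le_sup_right⟩) h
  exact ⟨K, hK.1, hNK, hK.2⟩

/-- The annihilators `AnnM A` with `A ≰ 𝓜` form a directed family because `𝓜` is prime; strong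
harmonicity makes it escape every maximal element containing `N`. -/
theorem not_ler_le_of_stronglyHarmonic (hgen : ∀ L : Submodule R M, SmProd ⊤ L = L)
    (hcomp : FICompact R M) (hSH : StronglyHarmonic R M) {N 𝓜 : Submodule R M} (hN : IsFI N)
    (hM : IsMaxFI 𝓜) (h : ¬ N ≤ 𝓜) : ¬ Ler N ≤ 𝓜 := by
  have htop : N ⊔ sSup (AnnM '' {A : Submodule R M | IsFI A ∧ ¬ A ≤ 𝓜}) = ⊤ := by
    by_contra hne
    obtain ⟨p, hp, hle⟩ := exists_isMaxFI hcomp (hN.sup (IsFI.sSup (by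
      rintro _ ⟨A, _, rfl⟩
      exact isFI_annM A))) hne
    have hpM : 𝓜 ≠ p := by
      rintro rfl
      exact h (le_sup_left.trans hle)
    obtain ⟨A, B, hA, -, hAM, hBp, hBA⟩ := hSH 𝓜 p hM hp hpM
    have hB : B ≤ AnnM A := le_sSup hBA
    have hA' : AnnM A ≤ sSup (AnnM '' {A : Submodule R M | IsFI A ∧ ¬ A ≤ 𝓜}) :=
      le_sSup (Set.mem_image_of_mem AnnM ⟨hA, hAM⟩)
    exact hBp (hB.trans (hA'.trans (le_sup_right.trans hle)))
  obtain ⟨_, ⟨A, ⟨hA, hAM⟩, rfl⟩, hNA⟩ := exists_sup_eq_top hcomp hN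
    (S := AnnM '' {A : Submodule R M | IsFI A ∧ ¬ A ≤ 𝓜})
    (by rintro _ ⟨A, _, rfl⟩; exact isFI_annM A)
    ⟨AnnM ⊤, ⊤, ⟨isFI_top, fun hle => hM.2.1 (top_le_iff.1 hle)⟩, rfl⟩
    (by
      rintro _ ⟨A, ⟨hA, hAM⟩, rfl⟩ _ ⟨B, ⟨hB, hBM⟩, rfl⟩
      refine ⟨AnnM (A ⊓ B), ⟨A ⊓ B, ⟨hA.inf hB, fun hle => hM.2.1 ?_⟩, rfl⟩, annM_anti inf_le_left,
        annM_anti inf_le_right⟩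
      rw [← sup_inf_eq_top hgen hM.1 hB (hM.sup_eq_top hA hAM) (hM.sup_eq_top hB hBM),
        sup_eq_left.2 hle]) htop
  have hALer : A ≤ Ler N := le_sSup ⟨hA, hNA⟩
  exact fun hle => hAM (hALer.trans hle)

/-- For `M` projective, every submodule `M`-generated, and `Λ^{fi}(M)`
compact, the five conditions (strongly harmonic, `Λ^{fi}(M)` normal, the `Ler`-maximality
condition, `Ler` preserving sums, and the `Ler` covering condition) are equivalent. -/
theorem dreamtheo (hproj : Module.Projective R M)
    (hgen : ∀ L : Submodule R M, SmProd ⊤ L = L)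
    (hcomp : FICompact R M) :
    List.TFAE [
      StronglyHarmonic R M,
      FINormal R M,
      ∀ N : Submodule R M, IsFI N → ∀ 𝓜 : Submodule R M, IsMaxFI 𝓜 →
        (Ler N ≤ 𝓜 ↔ N ≤ 𝓜),
      ∀ S : Set (Submodule R M), (∀ N ∈ S, IsFI N) →
        Ler (sSup S) = ⨆ N ∈ S, Ler N,
      ∀ N L : Submodule R M, IsFI N → IsFI L → N ⊔ L = ⊤ → Ler N ⊔ Ler L = ⊤ ] := by
  tfae_have 1 → 3 := fun hSH N hN 𝓜 hM =>
    ⟨fun h => by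
      by_contra hNM
      exact not_ler_le_of_stronglyHarmonic hgen hcomp hSH hN hM hNM h,
    fun h => (ler_le hgen hN).trans h⟩
  tfae_have 3 → 4 := by
    intro hc S hS
    refine le_antisymm (sSup_le ?_) (iSup₂_le fun N hN => ler_mono (le_sSup hN))
    rintro K ⟨-, hK⟩
    have hFI : IsFI (⨆ N ∈ S, Ler N) := by
      rw [← sSup_image]
      refine IsFI.sSup ?_
      rintro _ ⟨N, -, rfl⟩
      exact isFI_ler N
    refine le_of_sup_annM_eq_top hgen hFI ?_
    by_contra hne
    obtain ⟨𝓜, hM, hle⟩ := exists_isMaxFI hcomp (hFI.sup (isFI_annM K)) hne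
    refine hM.2.1 (top_le_iff.1 (hK.ge.trans (sup_le (sSup_le fun N hN => ?_)
      (le_sup_right.trans hle))))
    exact (hc N (hS N hN) 𝓜 hM).1 ((le_iSup₂ (f := fun N (_ : N ∈ S) => Ler N) N hN).trans
      (le_sup_left.trans hle))
  tfae_have 4 → 5 := by
    intro hd N L hN hL h
    have := hd {N, L} (by rintro P (rfl | rfl) <;> assumption)
    rwa [sSup_pair, h, ler_top, iSup_pair, eq_comm] at this
  tfae_have 5 → 2 := by
    intro he N L hN hL h
    have h' : N ⊔ Ler L = ⊤ :=
      eq_top_iff.2 ((he N L hN hL h).ge.trans (sup_le_sup_right (ler_le hgen hN) _))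
    obtain ⟨K, hK, hNK, hLK⟩ := exists_of_sup_ler_eq_top hproj hgen hcomp hN hL h'
    exact ⟨AnnM K, K, isFI_annM K, hK, hNK, by rwa [sup_comm], smProd_annM K⟩
  tfae_have 2 → 1 := by
    intro hb N L hN hL hne
    have hNL : ¬ L ≤ N := fun hle => hN.2.1 (hL.2.2 N hN.1 (lt_of_le_of_ne hle hne.symm))
    obtain ⟨A, B, hA, hB, hNB, hAL, hAB⟩ := hb N L hN.1 hL.1 (hN.sup_eq_top hL.1 hNL)
    refine ⟨B, A, hB, hA, fun hle => hN.2.1 ?_, fun hle => hL.2.1 ?_, hAB⟩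
    · rwa [sup_eq_left.2 hle] at hNB
    · rwa [sup_eq_right.2 hle] at hAL
  tfae_finish
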